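/- arXiv:2505.06571 — 2 statements merged into one kernel-verified Lean document; each statement's English description precedes it below -/
import Mathlib

section
/- (Main Lemma) Let P be a complete metric space, let (A_n) be a sequence of non-empty bounded closed subsets of P that is Cauchy with respect to the Hausdorff distance, and set A = ⋂_{n=1}^∞ closure( ⋃_{i=n}^∞ A_i ). Suppose x is a point of P, ε > 0, and m is a natural number such that ρ(x, A_i) < ε for every index i > m. Then ρ(x, A) ≤ ε. -/
open Metric Set Filter

/-- The Pompeiu–Hausdorff distance between two sets:
`h(A,B) = max { sup_{x ∈ A} ρ(x,B), sup_{y ∈ B} ρ(y,A) }`. -/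
noncomputable def hDist {P : Type*} [MetricSpace P] (A B : Set P) : ℝ :=
  max (⨆ x : A, infDist (x : P) B) (⨆ y : B, infDist (y : P) A)

theorem exists_near_of_hDist_lt {P : Type*} [MetricSpace P] {A B : Set P}
    (hA : Bornology.IsBounded A) (hB : B.Nonempty) {r : ℝ} (h : hDist A B < r)
    {y : P} (hy : y ∈ A) : ∃ z ∈ B, dist y z < r := by
  have hbdd : BddAbove (Set.range fun x : A => infDist (x : P) B) := by
    obtain ⟨b, hb⟩ := hB
    obtain ⟨R, hR⟩ := hA.subset_closedBall b
    refine ⟨R, ?_⟩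
    rintro _ ⟨a, rfl⟩
    exact (infDist_le_dist_of_mem hb).trans (hR a.2)
  have h1 : infDist y B ≤ ⨆ x : A, infDist (x : P) B := le_ciSup hbdd ⟨y, hy⟩
  exact (infDist_lt_iff hB).1 ((h1.trans (le_max_left _ _)).trans_lt h)

/-- Main Lemma: for a Cauchy sequence (in the Hausdorff distance) of non-empty bounded closed
sets in a complete space, with `A = ⋂_n closure (⋃_{i ≥ n} A_i)`: if `ρ(x, A_i) < ε` for every
`i > m`, then `ρ(x, A) ≤ ε`. -/
theorem main_lemma {P : Type*} [MetricSpace P] [CompleteSpace P]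
    (A : ℕ → Set P)
    (hne : ∀ n, (A n).Nonempty)
    (hbd : ∀ n, Bornology.IsBounded (A n))
    (hcl : ∀ n, IsClosed (A n))
    (hCauchy : ∀ ε > (0 : ℝ), ∃ N, ∀ m ≥ N, ∀ n ≥ N, hDist (A m) (A n) < ε)
    (x : P) (ε : ℝ) (hε : 0 < ε) (m : ℕ)
    (hx : ∀ i > m, infDist x (A i) < ε) :
    infDist x (⋂ n : ℕ, closure (⋃ i ≥ n, A i)) ≤ ε := by
  refine le_of_forall_pos_le_add fun δ hδ => ?_
  have hpos : ∀ k : ℕ, 0 < δ / 2 / 2 ^ k := fun k => by positivity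
  choose N hN using fun k : ℕ => hCauchy _ (hpos k)
  let M : ℕ → ℕ := fun k => m + 1 + k + ∑ j ∈ Finset.range (k + 1), N j
  have hMN : ∀ k, N k ≤ M k := fun k => by
    have := Finset.single_le_sum (f := N) (fun i _ => Nat.zero_le _)
      (Finset.mem_range.2 (Nat.lt_succ_self k))
    simp only [M]
    simp only [Nat.succ_eq_add_one] at this
    omega
  have hMs : ∀ k, M k ≤ M (k + 1) := fun k => by
    simp only [M]
    rw [Finset.sum_range_succ N (k + 1)]
    omega
  have hMk : ∀ k, k ≤ M k := fun k => by simp only [M]; omega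
  have hMm : m < M 0 := by simp only [M]; omega
  have step : ∀ (k : ℕ) (y : P), ∃ z, y ∈ A (M k) →
      z ∈ A (M (k + 1)) ∧ dist y z < δ / 2 / 2 ^ k := by
    intro k y
    by_cases hy : y ∈ A (M k)
    · obtain ⟨z, hz, hd⟩ := exists_near_of_hDist_lt (hbd _) (hne (M (k + 1)))
        (hN k (M k) (hMN k) (M (k + 1)) ((hMN k).trans (hMs k))) hy
      exact ⟨z, fun _ => ⟨hz, hd⟩⟩
    · exact ⟨y, fun h => absurd h hy⟩
  choose g hg using step
  obtain ⟨y0, hy0, hd0⟩ := (infDist_lt_iff (hne _)).1 (hx _ hMm)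
  let f : ℕ → P := fun k => Nat.rec y0 g k
  have hf : ∀ k, f k ∈ A (M k) := by
    intro k
    induction k with
    | zero => exact hy0
    | succ k ih => exact (hg k _ ih).1
  have hd : ∀ k, dist (f k) (f (k + 1)) ≤ δ / 2 / 2 ^ k := fun k => (hg k _ (hf k)).2.le
  obtain ⟨a, ha⟩ := cauchySeq_tendsto_of_complete (cauchySeq_of_le_geometric_two hd)
  have hda : dist (f 0) a ≤ δ := dist_le_of_le_geometric_two_of_tendsto₀ hd ha
  have hmem : a ∈ ⋂ n : ℕ, closure (⋃ i ≥ n, A i) := by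
    refine mem_iInter.2 fun n => mem_closure_of_tendsto ha ?_
    filter_upwards [eventually_ge_atTop n] with k hk
    exact mem_iUnion₂.2 ⟨M k, hk.trans (hMk k), hf k⟩
  calc infDist x _ ≤ dist x a := infDist_le_dist_of_mem hmem
    _ ≤ dist x (f 0) + dist (f 0) a := dist_triangle _ _ _
    _ ≤ ε + δ := add_le_add hd0.le hda
end

section
/- Let P be a complete metric space and let (A_n) be a sequence of non-empty bounded closed subsets of P that is Cauchy with respect to the Hausdorff distance. Then the set A = ⋂_{n=1}^∞ closure( ⋃_{i=n}^∞ A_i ) is non-empty. -/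
open Metric Set Filter

/-- A point of `A` is within `r` of a point of `B` as soon as `hDist A B < r`. -/
theorem exists_dist_lt_of_hDist_lt {P : Type*} [MetricSpace P] {A B : Set P}
    (hA : Bornology.IsBounded A) (hB : B.Nonempty) {r : ℝ} (h : hDist A B < r)
    {x : P} (hx : x ∈ A) : ∃ y ∈ B, dist x y < r := by
  have hbdd : BddAbove (range fun x : A => infDist (x : P) B) := by
    obtain ⟨b, hb⟩ := hB
    obtain ⟨R, hR⟩ := hA.subset_closedBall b
    refine ⟨R, ?_⟩
    rintro _ ⟨z, rfl⟩
    exact (infDist_le_dist_of_mem hb).trans (hR z.2)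
  have h1 : infDist x B ≤ ⨆ x : A, infDist (x : P) B := le_ciSup hbdd ⟨x, hx⟩
  exact (infDist_lt_iff hB).1 ((h1.trans (le_max_left _ _)).trans_lt h)

/-- For a Cauchy sequence (in the Hausdorff distance) of non-empty bounded closed sets in a
complete metric space, the set `A = ⋂_n closure (⋃_{i ≥ n} A_i)` is non-empty. -/
theorem iInter_closure_iUnion_nonempty {P : Type*} [MetricSpace P] [CompleteSpace P]
    (A : ℕ → Set P)
    (hne : ∀ n, (A n).Nonempty)
    (hbd : ∀ n, Bornology.IsBounded (A n))
    (hcl : ∀ n, IsClosed (A n))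
    (hCauchy : ∀ ε > (0 : ℝ), ∃ N, ∀ m ≥ N, ∀ n ≥ N, hDist (A m) (A n) < ε) :
    (⋂ n : ℕ, closure (⋃ i ≥ n, A i)).Nonempty := by
  choose N hN using fun k : ℕ => hCauchy ((1 / 2 : ℝ) ^ k) (by positivity)
  let M : ℕ → ℕ := fun k => k + ∑ j ∈ Finset.range (k + 1), N j
  have hM1 : ∀ k, N k ≤ M k := fun k =>
    (Finset.single_le_sum (f := N) (fun _ _ => Nat.zero_le _)
      (Finset.self_mem_range_succ k)).trans (Nat.le_add_left _ _)
  have hM2 : ∀ k, M k ≤ M (k + 1) := fun k => by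
    simp only [M, Finset.sum_range_succ _ (k + 1)]
    omega
  have step : ∀ k (x : A (M k)), ∃ y : A (M (k + 1)), dist (x : P) y < (1 / 2 : ℝ) ^ k := by
    intro k x
    obtain ⟨y, hy, hxy⟩ := exists_dist_lt_of_hDist_lt (hbd _) (hne _)
      (hN k _ (hM1 k) _ ((hM1 k).trans (hM2 k))) x.2
    exact ⟨⟨y, hy⟩, hxy⟩
  choose f hf using step
  let x : ∀ k, A (M k) := fun k =>
    Nat.rec (motive := fun k => A (M k)) ⟨(hne _).some, (hne _).some_mem⟩ f k
  have hx : ∀ k, dist (x k : P) (x (k + 1)) < (1 / 2 : ℝ) ^ k := fun k => hf k (x k)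
  have hc : CauchySeq fun k => (x k : P) :=
    cauchySeq_of_le_geometric (1 / 2) 1 (by norm_num) fun k => by
      simpa only [one_mul] using (hx k).le
  obtain ⟨a, ha⟩ := cauchySeq_tendsto_of_complete hc
  refine ⟨a, mem_iInter.2 fun n => mem_closure_of_tendsto ha ?_⟩
  filter_upwards [eventually_ge_atTop n] with k hk
  exact mem_iUnion₂.2 ⟨M k, hk.trans (Nat.le_add_right _ _), (x k).2⟩
end
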